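/- arXiv:2109.14504 — 2 statements merged into one kernel-verified Lean document; each statement's English description precedes it below -/
import Mathlib

section
/- Let n, m ∈ ℕ and let K ⊆ ℝ^m satisfy K = −K and K + K ⊆ C_K·K for some constant C_K ≥ 2 (where K + K is the Minkowski sum and C_K·K the dilate). Let ‖·‖_X : ℝ^m → [0,∞) be a function satisfying ‖−x‖_X = ‖x‖_X and the quasi-triangle inequality ‖x + y‖_X ≤ C_X·(‖x‖_X + ‖y‖_X) for all x, y ∈ ℝ^m, for some constant C_X ∈ (0,∞), and such that ‖c·x‖_X = |c|·‖x‖_X for all scalars c and x ∈ ℝ^m. Then for every matrix N ∈ ℝ^{n×m}: C_X^{−1}·rad_X(K, ker N) ≤ inf_φ sup_{x ∈ K} ‖x − φ(N x)‖_X ≤ C_K·rad_X(K, ker N), where rad_X(K, E) := sup{‖x‖_X : x ∈ K ∩ E} for a set E ⊆ ℝ^m, and the infimum runs over all (arbitrary, not necessarily linear) mappings φ : ℝ^n → ℝ^m. -/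
open scoped ENNReal NNReal Pointwise

/-- The kernel of a matrix `N ∈ ℝ^{n×m}`, as a subset of `ℝ^m`. -/
def kerSet {n m : ℕ} (N : Fin n → Fin m → ℝ) : Set (Fin m → ℝ) :=
  {x | ∀ i, ∑ j, N i j * x j = 0}

/-!
Let `T` be the linear map that supplies the data. For `x ∈ K ∩ ker T`, the points `x` and `-x` both
lie in `K` and yield the same data `0`, so a recovery map assigns the same `z` to both; writing
`2x = (x - z) + (x + z)` shows that it errs by at least `C_X⁻¹ ‖x‖_X` on one of them.

Conversely, let `φ` send the data `T x` of each `x ∈ K` to some point of `K` with the same data.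
Then `x - φ (T x)` lies in both `ker T` and `K + K ⊆ C_K K`, hence in `C_K (K ∩ ker T)`.
-/

section Recovery

variable {E F : Type*}

/-- The radius `rad_X(S) = sup_{x ∈ S} ‖x‖_X`, valued in `[0, ∞]`, where `p` stands for `‖·‖_X`;
the paper's `rad_X(K, ker N)` is the radius of `K ∩ ker N`. -/
noncomputable def quasiNormRadius (p : E → ℝ) (S : Set E) : ℝ≥0∞ :=
  ⨆ x ∈ S, ENNReal.ofReal (p x)

theorem ofReal_le_quasiNormRadius (p : E → ℝ) {S : Set E} {x : E} (hx : x ∈ S) :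
    ENNReal.ofReal (p x) ≤ quasiNormRadius p S :=
  le_iSup₂ (f := fun x (_ : x ∈ S) => ENNReal.ofReal (p x)) x hx

theorem mul_quasiNormRadius_le_iff {p : E → ℝ} {S : Set E} {a b : ℝ≥0∞} :
    a * quasiNormRadius p S ≤ b ↔ ∀ x ∈ S, a * ENNReal.ofReal (p x) ≤ b := by
  simp only [quasiNormRadius, ENNReal.mul_iSup, iSup_le_iff]

variable [AddCommGroup E]

/-- The worst-case error, measured by `p`, of recovering the elements `x` of `K` from the data
`T x` by the map `φ`. -/
noncomputable def worstCaseError (p : E → ℝ) (K : Set E) (T : E → F) (φ : F → E) : ℝ≥0∞ :=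
  ⨆ x ∈ K, ENNReal.ofReal (p (x - φ (T x)))

/-- The infimum of the worst-case error over all, possibly nonlinear, recovery maps. -/
noncomputable def minWorstCaseError (p : E → ℝ) (K : Set E) (T : E → F) : ℝ≥0∞ :=
  ⨅ φ : F → E, worstCaseError p K T φ

theorem ofReal_le_worstCaseError (p : E → ℝ) {K : Set E} (T : E → F) (φ : F → E) {x : E}
    (hx : x ∈ K) : ENNReal.ofReal (p (x - φ (T x))) ≤ worstCaseError p K T φ :=
  le_iSup₂ (f := fun x (_ : x ∈ K) => ENNReal.ofReal (p (x - φ (T x)))) x hx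

variable [AddCommGroup F]

theorem exists_mem_inter_ker_smul_eq_sub {𝕜 : Type*} [DivisionRing 𝕜] [Module 𝕜 E] [Module 𝕜 F]
    {K : Set E} (hK_neg : K = -K) {C : 𝕜} (hC : C ≠ 0) (hK_add : K + K ⊆ C • K) (T : E →ₗ[𝕜] F)
    {x z : E} (hx : x ∈ K) (hz : z ∈ K) (hT : T x = T z) :
    ∃ k ∈ K ∩ LinearMap.ker T, C • k = x - z := by
  have h_neg_mem : -z ∈ K := hK_neg ▸ Set.neg_mem_neg.2 hz
  obtain ⟨k, hk, hk_eq : C • k = x + -z⟩ := hK_add (Set.add_mem_add hx h_neg_mem)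
  rw [← sub_eq_add_neg] at hk_eq
  have h_smul : C • T k = 0 := by rw [← map_smul, hk_eq, map_sub, hT, sub_self]
  exact ⟨k, ⟨hk, (smul_eq_zero_iff_right hC).1 h_smul⟩, hk_eq⟩

variable [Module ℝ E] [Module ℝ F] {p : E → ℝ} {K : Set E} {C : ℝ}

theorem le_mul_max_sub_neg_sub (hp_smul : ∀ (c : ℝ) (x : E), p (c • x) = |c| * p x)
    (hC : 0 < C) (hp_add : ∀ x y, p (x + y) ≤ C * (p x + p y)) (x z : E) :
    p x ≤ C * max (p (x - z)) (p (-x - z)) := by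
  have h_neg : p (x + z) = p (-x - z) := by
    rw [← neg_add', ← neg_one_smul ℝ (x + z), hp_smul, abs_neg, abs_one, one_mul]
  have h_two : 2 * p x ≤ C * (p (x - z) + p (-x - z)) :=
    calc 2 * p x = p ((2 : ℝ) • x) := by rw [hp_smul, abs_two]
      _ = p ((x - z) + (x + z)) := by rw [two_smul, sub_add_add_cancel]
      _ ≤ C * (p (x - z) + p (-x - z)) := h_neg ▸ hp_add _ _
  have h_max : p (x - z) + p (-x - z) ≤ 2 * max (p (x - z)) (p (-x - z)) := by
    linarith [le_max_left (p (x - z)) (p (-x - z)), le_max_right (p (x - z)) (p (-x - z))]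
  linarith [mul_le_mul_of_nonneg_left h_max hC.le]

theorem inv_mul_quasiNormRadius_le_minWorstCaseError
    (hp_smul : ∀ (c : ℝ) (x : E), p (c • x) = |c| * p x) (hK_neg : K = -K) (hC : 0 < C)
    (hp_add : ∀ x y, p (x + y) ≤ C * (p x + p y)) (T : E →ₗ[ℝ] F) :
    ENNReal.ofReal C⁻¹ * quasiNormRadius p (K ∩ LinearMap.ker T) ≤ minWorstCaseError p K T := by
  refine le_iInf fun φ => mul_quasiNormRadius_le_iff.2 fun x ⟨hxK, hxT⟩ => ?_
  have hTx : T x = 0 := hxT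
  have h_neg_mem : -x ∈ K := hK_neg ▸ Set.neg_mem_neg.2 hxK
  have h_err : ENNReal.ofReal (p (x - φ 0)) ≤ worstCaseError p K T φ := by
    simpa only [hTx] using ofReal_le_worstCaseError p T φ hxK
  have h_err_neg : ENNReal.ofReal (p (-x - φ 0)) ≤ worstCaseError p K T φ := by
    simpa only [map_neg, hTx, neg_zero] using ofReal_le_worstCaseError p T φ h_neg_mem
  calc ENNReal.ofReal C⁻¹ * ENNReal.ofReal (p x)
      = ENNReal.ofReal (C⁻¹ * p x) := (ENNReal.ofReal_mul (inv_nonneg.2 hC.le)).symm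
    _ ≤ ENNReal.ofReal (max (p (x - φ 0)) (p (-x - φ 0))) :=
        ENNReal.ofReal_le_ofReal <|
          (inv_mul_le_iff₀ hC).2 (le_mul_max_sub_neg_sub hp_smul hC hp_add x (φ 0))
    _ ≤ worstCaseError p K T φ := by
        rw [ENNReal.ofReal_max]
        exact max_le h_err h_err_neg

theorem worstCaseError_le_of_consistent
    (hp_smul : ∀ (c : ℝ) (x : E), p (c • x) = |c| * p x) (hK_neg : K = -K) (hC : 0 < C)
    (hK_add : K + K ⊆ C • K) (T : E →ₗ[ℝ] F) {φ : F → E}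
    (hφ_mem : ∀ x ∈ K, φ (T x) ∈ K) (hφ_eq : ∀ x ∈ K, T (φ (T x)) = T x) :
    worstCaseError p K T φ ≤ ENNReal.ofReal C * quasiNormRadius p (K ∩ LinearMap.ker T) := by
  refine iSup₂_le fun x hx => ?_
  obtain ⟨k, hk, hk_eq⟩ :=
    exists_mem_inter_ker_smul_eq_sub hK_neg hC.ne' hK_add T hx (hφ_mem x hx) (hφ_eq x hx).symm
  rw [← hk_eq, hp_smul, abs_of_pos hC, ENNReal.ofReal_mul hC.le]
  gcongr
  exact ofReal_le_quasiNormRadius p hk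

theorem minWorstCaseError_le_mul_quasiNormRadius
    (hp_smul : ∀ (c : ℝ) (x : E), p (c • x) = |c| * p x) (hK_neg : K = -K) (hC : 0 < C)
    (hK_add : K + K ⊆ C • K) (T : E →ₗ[ℝ] F) :
    minWorstCaseError p K T ≤ ENNReal.ofReal C * quasiNormRadius p (K ∩ LinearMap.ker T) :=
  (iInf_le _ (Function.invFunOn T K)).trans <|
    worstCaseError_le_of_consistent hp_smul hK_neg hC hK_add T
      (fun _ hx => Function.invFunOn_apply_mem hx) (fun _ hx => Function.invFunOn_apply_eq hx)

end Recovery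

theorem kerSet_eq_ker_mulVecLin {n m : ℕ} (N : Fin n → Fin m → ℝ) :
    kerSet N = LinearMap.ker (Matrix.of N).mulVecLin :=
  Set.ext fun _ => funext_iff.symm

theorem statement12_general {E F : Type*} [AddCommGroup E] [Module ℝ E] [AddCommGroup F]
    [Module ℝ F] {K : Set E} {CK : ℝ} (hCK : 0 < CK) (hK_neg : K = -K) (hK_add : K + K ⊆ CK • K)
    {p : E → ℝ} {CX : ℝ} (hCX : 0 < CX) (hp_add : ∀ x y, p (x + y) ≤ CX * (p x + p y))
    (hp_smul : ∀ (c : ℝ) (x : E), p (c • x) = |c| * p x) (T : E →ₗ[ℝ] F) :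
    ENNReal.ofReal CX⁻¹ * quasiNormRadius p (K ∩ LinearMap.ker T) ≤ minWorstCaseError p K T ∧
      minWorstCaseError p K T ≤ ENNReal.ofReal CK * quasiNormRadius p (K ∩ LinearMap.ker T) :=
  ⟨inv_mul_quasiNormRadius_le_minWorstCaseError hp_smul hK_neg hCX hp_add T,
    minWorstCaseError_le_mul_quasiNormRadius hp_smul hK_neg hCK hK_add T⟩

/-- For a symmetric quasi-convex set `K` (with `K + K ⊆ C_K K`, `C_K ≥ 2`)
and a quasi-norm `‖·‖_X` (with quasi-triangle constant `C_X`), for every matrix `N`: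
`C_X⁻¹ rad_X(K, ker N) ≤ inf_φ sup_{x ∈ K} ‖x - φ(Nx)‖_X ≤ C_K rad_X(K, ker N)`,
the infimum running over arbitrary maps `φ : ℝ^n → ℝ^m`. Suprema and the infimum are taken
in `[0,∞]` to account for possibly infinite values. -/
theorem statement12 (n m : ℕ) (K : Set (Fin m → ℝ)) (CK : ℝ) (hCK : 2 ≤ CK)
    (hsym : K = -K) (hquasi : K + K ⊆ CK • K)
    (normX : (Fin m → ℝ) → ℝ) (hnn : ∀ x, 0 ≤ normX x)
    (hXneg : ∀ x, normX (-x) = normX x)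
    (CX : ℝ) (hCX : 0 < CX)
    (htri : ∀ x y, normX (x + y) ≤ CX * (normX x + normX y))
    (hhom : ∀ (c : ℝ) (x : Fin m → ℝ), normX (c • x) = |c| * normX x)
    (N : Fin n → Fin m → ℝ) :
    ENNReal.ofReal CX⁻¹ * (⨆ x ∈ K ∩ kerSet N, ENNReal.ofReal (normX x)) ≤
        (⨅ φ : (Fin n → ℝ) → (Fin m → ℝ),
          ⨆ x ∈ K, ENNReal.ofReal (normX (x - φ (fun i => ∑ j, N i j * x j)))) ∧
      (⨅ φ : (Fin n → ℝ) → (Fin m → ℝ),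
          ⨆ x ∈ K, ENNReal.ofReal (normX (x - φ (fun i => ∑ j, N i j * x j)))) ≤
        ENNReal.ofReal CK * (⨆ x ∈ K ∩ kerSet N, ENNReal.ofReal (normX x)) := by
  rw [kerSet_eq_ker_mulVecLin]
  exact statement12_general (two_pos.trans_le hCK) hsym hquasi hCX htri hhom
    (Matrix.of N).mulVecLin
end

section
/- Let 0 < q ≤ p ≤ ∞ and let σ₁ ≥ σ₂ ≥ … ≥ σ_m ≥ 0. Then for every 1 ≤ n ≤ m, the n-th Gelfand number of the diagonal operator D_σ : ℓ_p^m → ℓ_q^m satisfies c_n(D_σ : ℓ_p^m → ℓ_q^m) = (Σ_{j=n}^m σ_j^r)^{1/r}, where 1/r = 1/q − 1/p if q < p, and (interpreting the right-hand side as σ_n) r = ∞ if q = p. -/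
open scoped ENNReal NNReal

/-- The `ℓ_p`-(quasi-)norm on `ℝ^m`, for `0 < p ≤ ∞`. -/
noncomputable def lpnorm (p : ℝ≥0∞) {m : ℕ} (x : Fin m → ℝ) : ℝ :=
  if p = ∞ then ⨆ j, |x j| else (∑ j, |x j| ^ p.toReal) ^ (1 / p.toReal)

/-- The `n`-th Gelfand number of the diagonal operator `D_σ : ℓ_p^m → ℓ_q^m`:
the infimum over all linear subspaces `E ⊆ ℝ^m` of codimension at most `n - 1` of
`sup {‖D_σ x‖_q : x ∈ B_p^m ∩ E}`. -/
noncomputable def gelfandFin (p q : ℝ≥0∞) {m : ℕ} (σ : Fin m → ℝ) (n : ℕ) : ℝ :=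
  sInf { t | ∃ E : Submodule ℝ (Fin m → ℝ),
      Module.finrank ℝ ((Fin m → ℝ) ⧸ E) ≤ n - 1 ∧
      t = sSup ((fun x => lpnorm q (fun j => σ j * x j)) ''
        {x : Fin m → ℝ | lpnorm p x ≤ 1 ∧ x ∈ E}) }

/-!
With `1/r = 1/q - 1/p`, both cases say that the Gelfand number is the `ℓ_r`-norm of the tail
`τ = (σ_n, …, σ_m)`. The upper bound is Hölder's inequality on the subspace where the first `n - 1`
coordinates vanish.

For the lower bound let `r < ∞` and let `E` have codimension at most `n - 1`. An extreme point `x`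
of the part of `E` in the box `|x_j| ≤ σ_j^{r/p}` has at least `dim E ≥ m - n + 1` tight
coordinates. With `N = ‖D_σ x‖_q`, a tight coordinate contributes `σ_j^r` to `N^q`, so
`‖τ‖_r^r ≤ N^q` as `σ` is non-increasing, and the box constraints give `‖x‖_p ≤ N^{q/p}`. Hence
`‖τ‖_r ‖x‖_p ≤ N^{q/r + q/p} = N`. For `r = ∞` a nonzero vector of `E` vanishing at the indices
`j > n` takes the place of `x`.
-/

open MeasureTheory ENNReal Finset

section Subspaces

variable {ι : Type*}

lemma finrank_quotient_ker_funLeft_le (J : Finset ι) :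
    Module.finrank ℝ ((ι → ℝ) ⧸ LinearMap.ker (LinearMap.funLeft ℝ ℝ ((↑) : J → ι))) ≤ #J := by
  rw [(LinearMap.quotKerEquivRange _).finrank_eq]
  exact (Submodule.finrank_le _).trans (by simp)

lemma exists_ne_zero_mem_forall_eq_zero {E : Submodule ℝ (ι → ℝ)} {J : Finset ι}
    (hJ : #J < Module.finrank ℝ E) : ∃ y ∈ E, y ≠ 0 ∧ ∀ j ∈ J, y j = 0 := by
  let restrict : E →ₗ[ℝ] (J → ℝ) := LinearMap.funLeft ℝ ℝ ((↑) : J → ι) ∘ₗ E.subtype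
  have : FiniteDimensional ℝ E := Module.finite_of_finrank_pos (Nat.zero_lt_of_lt hJ)
  have hker : LinearMap.ker restrict ≠ ⊥ := LinearMap.ker_ne_bot_of_finrank_lt (by simpa using hJ)
  obtain ⟨y, hy, hy0⟩ := Submodule.exists_mem_ne_zero_of_ne_bot hker
  exact ⟨y, y.2, by simpa using hy0, fun j hj => congrFun (LinearMap.mem_ker.1 hy) ⟨j, hj⟩⟩

lemma exists_pos_forall_mul_abs_le [Finite ι] {y d : ι → ℝ} (hd : 0 ≤ d)
    (hy : ∀ j, d j = 0 → y j = 0) : ∃ ε > 0, ∀ j, ε * |y j| ≤ d j := by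
  have eventually_le (j : ι) : ∀ᶠ ε in nhdsWithin (0 : ℝ) (Set.Ioi 0), ε * |y j| ≤ d j := by
    rcases (hd j).eq_or_lt with hj | hj
    · simp [hy j hj.symm, ← hj]
    · have htendsto : Filter.Tendsto (fun ε => ε * |y j|) (nhds 0) (nhds (0 * |y j|)) :=
        (continuous_mul_const _).tendsto 0
      rw [zero_mul] at htendsto
      exact nhdsWithin_le_nhds (htendsto.eventually_le_const hj)
  exact (eventually_mem_nhdsWithin.and (Filter.eventually_all.2 eventually_le)).exists

lemma exists_mem_abs_le_finrank_le_card [Fintype ι] (E : Submodule ℝ (ι → ℝ)) {b : ι → ℝ}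
    (hb : 0 ≤ b) :
    ∃ x ∈ E, (∀ j, |x j| ≤ b j) ∧ Module.finrank ℝ E ≤ #{j | |x j| = b j} := by
  let box : Set (ι → ℝ) := E ∩ Set.Icc (-b) b
  have mem_box {x : ι → ℝ} : x ∈ box ↔ x ∈ E ∧ ∀ j, |x j| ≤ b j := by
    simp [box, Pi.le_def, abs_le, forall_and]
  -- At an extreme point with too few tight coordinates, some direction in `E` vanishes on all of
  -- them, and the point could be moved both ways along it inside the box.
  have hcompact : IsCompact box := isCompact_Icc.inter_left E.closed_of_finiteDimensional
  obtain ⟨x, hx⟩ := hcompact.extremePoints_nonempty ⟨0, mem_box.2 ⟨E.zero_mem, by simpa using! hb⟩⟩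
  obtain ⟨hxE, hxb⟩ := mem_box.1 hx.1
  refine ⟨x, hxE, hxb, ?_⟩
  by_contra! hcard
  obtain ⟨y, hyE, hy0, hy⟩ := exists_ne_zero_mem_forall_eq_zero hcard
  obtain ⟨ε, hε, hεy⟩ := exists_pos_forall_mul_abs_le (y := y) (d := fun j => b j - |x j|)
    (fun j => sub_nonneg.2 (hxb j)) fun j hj => hy j (by simpa using (sub_eq_zero.1 hj).symm)
  have add_smul_mem {t : ℝ} (ht : |t| = ε) : x + t • y ∈ box := by
    refine mem_box.2 ⟨E.add_mem hxE (E.smul_mem _ hyE), fun j => ?_⟩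
    calc |x j + t * y j| ≤ |x j| + ε * |y j| := by rw [← ht, ← abs_mul]; exact abs_add_le _ _
      _ ≤ b j := by linarith [hεy j]
  have hmid : x ∈ openSegment ℝ (x + ε • y) (x + (-ε) • y) :=
    ⟨1 / 2, 1 / 2, by norm_num, by norm_num, by norm_num, by module⟩
  have hfix : x + ε • y = x :=
    hx.2 (add_smul_mem (abs_of_pos hε)) (add_smul_mem (by rw [abs_neg, abs_of_pos hε])) hmid
  exact (smul_ne_zero hε.ne' hy0) (by simpa using hfix)

end Subspaces

lemma sum_le_sum_of_isUpperSet_of_card_le {ι : Type*} [LinearOrder ι] {f : ι → ℝ} (hf0 : 0 ≤ f)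
    (hf : Antitone f) {T J : Finset ι} (hT : IsUpperSet (T : Set ι)) (hcard : #T ≤ #J) :
    ∑ j ∈ T, f j ≤ ∑ j ∈ J, f j := by
  rcases (T \ J).eq_empty_or_nonempty with hTJ | hTJ
  · exact sum_le_sum_of_subset_of_nonneg (sdiff_eq_empty_iff_subset.1 hTJ) fun j _ _ => hf0 j
  obtain ⟨k, hk, hkmax⟩ := (T \ J).exists_max_image f hTJ
  have le_of_notMem {j : ι} (hj : j ∈ J \ T) : f k ≤ f j :=
    hf <| le_of_not_ge fun hkj => (mem_sdiff.1 hj).2 (hT hkj (mem_sdiff.1 hk).1)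
  have hsdiff : ∑ j ∈ T \ J, f j ≤ ∑ j ∈ J \ T, f j :=
    calc ∑ j ∈ T \ J, f j ≤ #(T \ J) • f k := sum_le_card_nsmul _ _ _ hkmax
      _ ≤ #(J \ T) • f k := nsmul_le_nsmul_left (hf0 k) (card_sdiff_le_card_sdiff_iff.2 hcard)
      _ ≤ ∑ j ∈ J \ T, f j := card_nsmul_le_sum _ _ _ fun j hj => le_of_notMem hj
  rw [← sum_inter_add_sum_sdiff T J, ← sum_inter_add_sum_sdiff J T, inter_comm J T]
  gcongr

section Exponents

variable {p q r : ℝ≥0∞}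

lemma holderTriple_inv_sub_inv (hqp : q ≤ p) : HolderTriple (q⁻¹ - p⁻¹)⁻¹ p q where
  inv_add_inv_eq_inv := by rw [inv_inv, tsub_add_cancel_of_le (ENNReal.inv_le_inv.2 hqp)]

lemma left_ne_zero_of_holderTriple (r p : ℝ≥0∞) [HolderTriple r p q] (hq : q ≠ 0) : r ≠ 0 :=
  ((pos_iff_ne_zero.2 hq).trans_le (HolderTriple.le r p q)).ne'

lemma right_ne_zero_of_holderTriple (r p : ℝ≥0∞) [HolderTriple r p q] (hq : q ≠ 0) : p ≠ 0 :=
  left_ne_zero_of_holderTriple p r hq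

lemma inv_toReal_add_inv_toReal [HolderTriple r p q] (hq : q ≠ 0) :
    r.toReal⁻¹ + p.toReal⁻¹ = q.toReal⁻¹ := by
  have hr : r ≠ 0 := left_ne_zero_of_holderTriple r p hq
  have hp : p ≠ 0 := right_ne_zero_of_holderTriple r p hq
  simp_rw [← ENNReal.toReal_inv, HolderTriple.inv_eq r p q]
  exact (ENNReal.toReal_add (ENNReal.inv_ne_top.2 hr) (ENNReal.inv_ne_top.2 hp)).symm

end Exponents

section Lpnorm

variable {p q r : ℝ≥0∞} {m : ℕ} {x y : Fin m → ℝ}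

lemma lpnorm_nonneg : 0 ≤ lpnorm p x := by
  unfold lpnorm
  split_ifs
  · exact Real.iSup_nonneg fun _ => abs_nonneg _
  · positivity

lemma lpnorm_rpow_toReal (hp0 : p ≠ 0) (hp : p ≠ ∞) (x : Fin m → ℝ) :
    lpnorm p x ^ p.toReal = ∑ j, |x j| ^ p.toReal := by
  rw [lpnorm, if_neg hp, one_div]
  exact Real.rpow_inv_rpow (by positivity) (ENNReal.toReal_pos hp0 hp).ne'

lemma lpnorm_eq_toReal_eLpNorm (hp : p ≠ 0) (x : Fin m → ℝ) :
    lpnorm p x = (eLpNorm x p .count).toReal := by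
  unfold lpnorm
  split_ifs with htop
  · simp [htop, ENNReal.toReal_iSup]
  · rw [eLpNorm_eq_lintegral_rpow_enorm_toReal hp htop, lintegral_count, tsum_fintype,
      ← ENNReal.toReal_rpow,
      ENNReal.toReal_sum fun j _ => ENNReal.rpow_ne_top_of_nonneg toReal_nonneg enorm_ne_top]
    simp [← ENNReal.toReal_rpow]

lemma lpnorm_mono (hp : p ≠ 0) (h : ∀ j, |x j| ≤ |y j|) : lpnorm p x ≤ lpnorm p y := by
  rw [lpnorm_eq_toReal_eLpNorm hp, lpnorm_eq_toReal_eLpNorm hp]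
  exact ENNReal.toReal_mono MemLp.of_discrete.eLpNorm_ne_top (eLpNorm_mono h)

lemma lpnorm_smul (hp : p ≠ 0) (a : ℝ) (x : Fin m → ℝ) :
    lpnorm p (a • x) = |a| * lpnorm p x := by
  simp [lpnorm_eq_toReal_eLpNorm hp, eLpNorm_const_smul]

lemma abs_le_lpnorm (hp : p ≠ 0) (x : Fin m → ℝ) (j : Fin m) : |x j| ≤ lpnorm p x := by
  rw [lpnorm_eq_toReal_eLpNorm hp, ← Real.norm_eq_abs, ← toReal_enorm]
  exact ENNReal.toReal_mono MemLp.of_discrete.eLpNorm_ne_top (enorm_le_eLpNorm_count x j hp)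

lemma lpnorm_pos (hp : p ≠ 0) (hx : x ≠ 0) : 0 < lpnorm p x := by
  obtain ⟨j, hj⟩ := Function.ne_iff.1 hx
  exact (abs_pos.2 hj).trans_le (abs_le_lpnorm hp x j)

lemma lpnorm_mul_le [HolderTriple r p q] (hq : q ≠ 0) (x y : Fin m → ℝ) :
    lpnorm q (x * y) ≤ lpnorm r x * lpnorm p y := by
  have hr : r ≠ 0 := left_ne_zero_of_holderTriple r p hq
  have hp : p ≠ 0 := right_ne_zero_of_holderTriple r p hq
  rw [lpnorm_eq_toReal_eLpNorm hq, lpnorm_eq_toReal_eLpNorm hr, lpnorm_eq_toReal_eLpNorm hp,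
    ← ENNReal.toReal_mul]
  exact ENNReal.toReal_mono
    (ENNReal.mul_ne_top MemLp.of_discrete.eLpNorm_ne_top MemLp.of_discrete.eLpNorm_ne_top)
    (eLpNorm_smul_le_mul_eLpNorm (φ := x) (f := y) .of_discrete .of_discrete)

end Lpnorm

section Extremal

lemma rpow_le_mul_rpow_of_le_rpow_div {a b c s t : ℝ} (h : a.HolderTriple b c) (hs : 0 ≤ s)
    (ht : 0 ≤ t) (hts : t ≤ s ^ (a / b)) : t ^ b ≤ (s * t) ^ c := by
  obtain ⟨ha, hb, hc⟩ := h.all_pos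
  have hbc : b / c = b / a + 1 := by
    rw [div_eq_mul_inv, ← h.inv_add_inv_eq_inv]
    field_simp
  have hs_ge : t ^ (b / a) ≤ s := by
    rw [← inv_div a b]
    exact (Real.rpow_inv_le_iff_of_pos ht hs (div_pos ha hb)).2 hts
  calc t ^ b = (t ^ (b / a) * t) ^ c := by
        rw [← Real.rpow_add_one' ht (by positivity), ← hbc, ← Real.rpow_mul ht,
          div_mul_cancel₀ _ hc.ne']
    _ ≤ (s * t) ^ c := by gcongr

lemma mul_rpow_div_rpow {a b c s : ℝ} (ha : 0 < a) (hc : 0 < c) (hb : 0 ≤ b)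
    (habc : a⁻¹ + b⁻¹ = c⁻¹) (hs : 0 ≤ s) : (s * s ^ (a / b)) ^ c = s ^ a := by
  have hexp : (1 + a / b) * c = a :=
    calc (1 + a / b) * c = a * (a⁻¹ + b⁻¹) * c := by
          rw [mul_add, mul_inv_cancel₀ ha.ne', div_eq_mul_inv]
      _ = a := by rw [habc, inv_mul_cancel_right₀ hc.ne']
  rw [← Real.rpow_one_add' hs (by positivity), ← Real.rpow_mul hs, hexp]

variable {p q r : ℝ≥0∞} {m : ℕ} {σ x : Fin m → ℝ} {T : Finset (Fin m)}

lemma lpnorm_indicator_rpow_toReal (hr0 : r ≠ 0) (hr : r ≠ ∞) (σ : Fin m → ℝ)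
    (T : Finset (Fin m)) :
    lpnorm r ((T : Set (Fin m)).indicator σ) ^ r.toReal = ∑ j ∈ T, |σ j| ^ r.toReal := by
  have hr' : r.toReal ≠ 0 := (ENNReal.toReal_pos hr0 hr).ne'
  rw [lpnorm_rpow_toReal hr0 hr, ← sum_indicator_subset _ (subset_univ T)]
  refine sum_congr rfl fun j _ => ?_
  by_cases hj : j ∈ T <;> simp [hj, hr']

-- For `p = ∞`, `p.toReal = 0`, so the exponents `r / p` and `q / p` are `0`, as they should be.
lemma lpnorm_le_lpnorm_mul_rpow_of_abs_le [HolderTriple r p q] (hq : q ≠ 0) (hr : r ≠ ∞)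
    (hσ : 0 ≤ σ) (hx : ∀ j, |x j| ≤ σ j ^ (r.toReal / p.toReal)) :
    lpnorm p x ≤ lpnorm q (σ * x) ^ (q.toReal / p.toReal) := by
  have hqt : q ≠ ∞ := ne_top_of_le_ne_top hr (HolderTriple.le r p q)
  have hr0 : r ≠ 0 := left_ne_zero_of_holderTriple r p hq
  have hp0 : p ≠ 0 := right_ne_zero_of_holderTriple r p hq
  by_cases hp : p = ∞
  · subst hp
    simpa [lpnorm] using Real.iSup_le (fun j => by simpa using hx j) zero_le_one
  have htriple : r.toReal.HolderTriple p.toReal q.toReal :=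
    ⟨inv_toReal_add_inv_toReal hq, ENNReal.toReal_pos hr0 hr, ENNReal.toReal_pos hp0 hp⟩
  rw [div_eq_mul_inv, Real.rpow_mul lpnorm_nonneg,
    Real.le_rpow_inv_iff_of_pos lpnorm_nonneg (Real.rpow_nonneg lpnorm_nonneg _) htriple.symm.pos,
    lpnorm_rpow_toReal hp0 hp, lpnorm_rpow_toReal hq hqt]
  gcongr with j
  rw [Pi.mul_apply, abs_mul, abs_of_nonneg (hσ j)]
  exact rpow_le_mul_rpow_of_le_rpow_div htriple (hσ j) (abs_nonneg _) (hx j)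

lemma lpnorm_indicator_le_lpnorm_mul_rpow_of_card_le [HolderTriple r p q] (hq : q ≠ 0)
    (hr : r ≠ ∞) (hσ0 : 0 ≤ σ) (hσ : Antitone σ) (hT : IsUpperSet (T : Set (Fin m)))
    (hcard : #T ≤ #{j | |x j| = σ j ^ (r.toReal / p.toReal)}) :
    lpnorm r ((T : Set (Fin m)).indicator σ) ≤
      lpnorm q (σ * x) ^ (q.toReal / r.toReal) := by
  have hqt : q ≠ ∞ := ne_top_of_le_ne_top hr (HolderTriple.le r p q)
  have hr0 : r ≠ 0 := left_ne_zero_of_holderTriple r p hq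
  have hr_pos : 0 < r.toReal := ENNReal.toReal_pos hr0 hr
  have hq_pos : 0 < q.toReal := ENNReal.toReal_pos hq hqt
  have abs_mul_rpow_of_eq {j : Fin m} (hj : |x j| = σ j ^ (r.toReal / p.toReal)) :
      |σ j * x j| ^ q.toReal = σ j ^ r.toReal := by
    rw [abs_mul, hj, abs_of_nonneg (hσ0 j), mul_rpow_div_rpow hr_pos hq_pos toReal_nonneg
      (inv_toReal_add_inv_toReal hq) (hσ0 j)]
  rw [div_eq_mul_inv, Real.rpow_mul lpnorm_nonneg, Real.le_rpow_inv_iff_of_pos lpnorm_nonneg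
    (Real.rpow_nonneg lpnorm_nonneg _) hr_pos]
  calc lpnorm r ((T : Set (Fin m)).indicator σ) ^ r.toReal
      = ∑ j ∈ T, σ j ^ r.toReal := by
        rw [lpnorm_indicator_rpow_toReal hr0 hr]
        exact sum_congr rfl fun j _ => by rw [abs_of_nonneg (hσ0 j)]
    _ ≤ ∑ j with |x j| = σ j ^ (r.toReal / p.toReal), σ j ^ r.toReal :=
        sum_le_sum_of_isUpperSet_of_card_le (fun j => Real.rpow_nonneg (hσ0 j) _)
          (fun i j hij => Real.rpow_le_rpow (hσ0 j) (hσ hij) hr_pos.le) hT hcard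
    _ = ∑ j with |x j| = σ j ^ (r.toReal / p.toReal), |σ j * x j| ^ q.toReal :=
        sum_congr rfl fun j hj => (abs_mul_rpow_of_eq (mem_filter.1 hj).2).symm
    _ ≤ ∑ j, |σ j * x j| ^ q.toReal :=
        sum_le_sum_of_subset_of_nonneg (subset_univ _) fun j _ _ => by positivity
    _ = lpnorm q (σ * x) ^ q.toReal := (lpnorm_rpow_toReal hq hqt _).symm

lemma exists_lpnorm_indicator_mul_le_of_ne_top [HolderTriple r p q] (hq : q ≠ 0) (hr : r ≠ ∞)
    (hσ0 : 0 ≤ σ) (hσ : Antitone σ) (hT : IsUpperSet (T : Set (Fin m)))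
    (hpos : 0 < lpnorm r ((T : Set (Fin m)).indicator σ)) {E : Submodule ℝ (Fin m → ℝ)}
    (hE : #T ≤ Module.finrank ℝ E) :
    ∃ x ∈ E, x ≠ 0 ∧
      lpnorm r ((T : Set (Fin m)).indicator σ) * lpnorm p x ≤ lpnorm q (σ * x) := by
  have hqt : q ≠ ∞ := ne_top_of_le_ne_top hr (HolderTriple.le r p q)
  have hq_pos : 0 < q.toReal := ENNReal.toReal_pos hq hqt
  have hr_pos : 0 < r.toReal :=
    ENNReal.toReal_pos (left_ne_zero_of_holderTriple r p hq) hr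
  obtain ⟨x, hxE, hxle, hxcard⟩ := exists_mem_abs_le_finrank_le_card E
    (b := fun j => σ j ^ (r.toReal / p.toReal)) fun j => Real.rpow_nonneg (hσ0 j) _
  have htail : lpnorm r ((T : Set (Fin m)).indicator σ) ≤
      lpnorm q (σ * x) ^ (q.toReal / r.toReal) :=
    lpnorm_indicator_le_lpnorm_mul_rpow_of_card_le hq hr hσ0 hσ hT (hE.trans hxcard)
  have hexp : q.toReal / r.toReal + q.toReal / p.toReal = 1 := by
    rw [div_eq_mul_inv, div_eq_mul_inv, ← mul_add, inv_toReal_add_inv_toReal hq,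
      mul_inv_cancel₀ hq_pos.ne']
  refine ⟨x, hxE, ?_, ?_⟩
  · rintro rfl
    have hzero : lpnorm q (σ * 0) = 0 := by simpa using lpnorm_smul hq 0 (0 : Fin m → ℝ)
    rw [hzero, Real.zero_rpow (by positivity)] at htail
    exact htail.not_gt hpos
  · calc lpnorm r ((T : Set (Fin m)).indicator σ) * lpnorm p x
        ≤ lpnorm q (σ * x) ^ (q.toReal / r.toReal) * lpnorm q (σ * x) ^ (q.toReal / p.toReal) :=
          mul_le_mul htail (lpnorm_le_lpnorm_mul_rpow_of_abs_le hq hr hσ0 hxle) lpnorm_nonneg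
            (Real.rpow_nonneg lpnorm_nonneg _)
      _ = lpnorm q (σ * x) := by
          rw [← Real.rpow_add' lpnorm_nonneg (by simp [hexp]), hexp, Real.rpow_one]

lemma exists_mul_lpnorm_le_of_isUpperSet (hp : p ≠ 0) (hσ0 : 0 ≤ σ) (hσ : Antitone σ)
    (hT : IsUpperSet (T : Set (Fin m))) {k : Fin m} (hk : k ∈ T)
    {E : Submodule ℝ (Fin m → ℝ)} (hE : #T ≤ Module.finrank ℝ E) :
    ∃ x ∈ E, x ≠ 0 ∧ σ k * lpnorm p x ≤ lpnorm p (σ * x) := by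
  obtain ⟨x, hxE, hx0, hx⟩ :=
    exists_ne_zero_mem_forall_eq_zero ((card_erase_lt_of_mem hk).trans_le hE)
  have le_of_apply_ne_zero {j : Fin m} (hj : x j ≠ 0) : σ k ≤ σ j := by
    refine hσ (le_of_not_gt fun hkj => hj (hx j ?_))
    exact mem_erase.2 ⟨hkj.ne', hT hkj.le hk⟩
  refine ⟨x, hxE, hx0, ?_⟩
  calc σ k * lpnorm p x = lpnorm p (σ k • x) := by rw [lpnorm_smul hp, abs_of_nonneg (hσ0 k)]
    _ ≤ lpnorm p (σ * x) := lpnorm_mono hp fun j => by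
      by_cases hj : x j = 0
      · simp [hj]
      · rw [Pi.smul_apply, smul_eq_mul, Pi.mul_apply, abs_mul, abs_mul, abs_of_nonneg (hσ0 k),
          abs_of_nonneg (hσ0 j)]
        gcongr
        exact le_of_apply_ne_zero hj

lemma exists_mem_lpnorm_top_indicator_eq (hσ0 : 0 ≤ σ)
    (hpos : 0 < lpnorm ∞ ((T : Set (Fin m)).indicator σ)) :
    ∃ k ∈ T, lpnorm ∞ ((T : Set (Fin m)).indicator σ) = σ k := by
  rw [lpnorm, if_pos rfl] at hpos ⊢
  have : Nonempty (Fin m) := by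
    by_contra! hempty
    simp at hpos
  obtain ⟨k, hk⟩ := exists_eq_ciSup_of_finite (f := fun j => |(T : Set (Fin m)).indicator σ j|)
  have hkT : k ∈ T := by
    by_contra hkT
    rw [← hk, Set.indicator_of_notMem (mem_coe.not.2 hkT), abs_zero] at hpos
    exact hpos.false
  exact ⟨k, hkT, by rw [← hk, Set.indicator_of_mem (mem_coe.2 hkT), abs_of_nonneg (hσ0 k)]⟩

lemma exists_lpnorm_indicator_mul_le [HolderTriple r p q] (hq : q ≠ 0)
    (hσ0 : 0 ≤ σ) (hσ : Antitone σ) (hT : IsUpperSet (T : Set (Fin m)))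
    (hpos : 0 < lpnorm r ((T : Set (Fin m)).indicator σ)) {E : Submodule ℝ (Fin m → ℝ)}
    (hE : #T ≤ Module.finrank ℝ E) :
    ∃ x ∈ E, x ≠ 0 ∧
      lpnorm r ((T : Set (Fin m)).indicator σ) * lpnorm p x ≤ lpnorm q (σ * x) := by
  by_cases hr : r = ∞
  · subst hr
    obtain rfl : p = q := HolderTriple.unique ∞ p p q
    obtain ⟨k, hk, hkT⟩ := exists_mem_lpnorm_top_indicator_eq hσ0 hpos
    rw [hkT]
    exact exists_mul_lpnorm_le_of_isUpperSet hq hσ0 hσ hT hk hE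
  · exact exists_lpnorm_indicator_mul_le_of_ne_top hq hr hσ0 hσ hT hpos hE

end Extremal

section Gelfand

variable {p q r : ℝ≥0∞} {m n : ℕ} {σ : Fin m → ℝ} {c : ℝ}

lemma sSup_image_lpnorm_nonneg (S : Set (Fin m → ℝ)) :
    0 ≤ sSup ((fun x => lpnorm q (fun j => σ j * x j)) '' S) :=
  Real.sSup_nonneg (Set.forall_mem_image.2 fun _ _ => lpnorm_nonneg)

lemma gelfandFin_nonneg : 0 ≤ gelfandFin p q σ n := by
  refine Real.sInf_nonneg ?_
  rintro _ ⟨E, -, rfl⟩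
  exact sSup_image_lpnorm_nonneg _

lemma gelfandFin_le {E : Submodule ℝ (Fin m → ℝ)}
    (hE : Module.finrank ℝ ((Fin m → ℝ) ⧸ E) ≤ n - 1) (hc : 0 ≤ c)
    (h : ∀ x ∈ E, lpnorm q (σ * x) ≤ c * lpnorm p x) : gelfandFin p q σ n ≤ c := by
  refine csInf_le_of_le ⟨0, ?_⟩ ⟨E, hE, rfl⟩ (Real.sSup_le ?_ hc)
  · rintro _ ⟨F, -, rfl⟩
    exact sSup_image_lpnorm_nonneg _
  · rintro _ ⟨x, ⟨hx1, hxE⟩, rfl⟩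
    exact (h x hxE).trans (mul_le_of_le_one_right hc hx1)

lemma lpnorm_mul_le_of_lpnorm_le_one (hp : p ≠ 0) (hq : q ≠ 0) {x : Fin m → ℝ}
    (hx : lpnorm p x ≤ 1) : lpnorm q (σ * x) ≤ lpnorm q σ := by
  refine lpnorm_mono hq fun j => ?_
  rw [Pi.mul_apply, abs_mul]
  exact mul_le_of_le_one_right (abs_nonneg _) ((abs_le_lpnorm hp x j).trans hx)

lemma le_gelfandFin (hp : p ≠ 0) (hq : q ≠ 0)
    (h : ∀ E : Submodule ℝ (Fin m → ℝ), Module.finrank ℝ ((Fin m → ℝ) ⧸ E) ≤ n - 1 →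
      ∃ x ∈ E, x ≠ 0 ∧ c * lpnorm p x ≤ lpnorm q (σ * x)) : c ≤ gelfandFin p q σ n := by
  refine le_csInf ⟨_, ⊤, Module.finrank_zero_of_subsingleton.trans_le (Nat.zero_le _), rfl⟩ ?_
  rintro _ ⟨E, hE, rfl⟩
  obtain ⟨x, hxE, hx0, hcx⟩ := h E hE
  have hx_pos : 0 < lpnorm p x := lpnorm_pos hp hx0
  have hunit : lpnorm p ((lpnorm p x)⁻¹ • x) = 1 := by
    rw [lpnorm_smul hp, abs_of_pos (inv_pos.2 hx_pos), inv_mul_cancel₀ hx_pos.ne']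
  refine le_csSup_of_le ⟨lpnorm q σ, ?_⟩
    ⟨(lpnorm p x)⁻¹ • x, ⟨hunit.le, E.smul_mem _ hxE⟩, rfl⟩ ?_
  · rintro _ ⟨y, ⟨hy, -⟩, rfl⟩
    exact lpnorm_mul_le_of_lpnorm_le_one hp hq hy
  · change c ≤ lpnorm q (σ * (lpnorm p x)⁻¹ • x)
    rw [mul_smul_comm, lpnorm_smul hq, abs_of_pos (inv_pos.2 hx_pos), inv_mul_eq_div]
    exact (le_div_iff₀ hx_pos).2 hcx

/-- The positions in `Fin m` of the coefficients `σ_n, …, σ_m`, which the paper numbers from `1`.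
For `n = 0` these are all positions, as for `n = 1`. -/
def tailIndices (m n : ℕ) : Finset (Fin m) := {j | n ≤ (j : ℕ) + 1}

lemma mem_tailIndices {j : Fin m} : j ∈ tailIndices m n ↔ n ≤ (j : ℕ) + 1 := by
  simp [tailIndices]

lemma isUpperSet_tailIndices : IsUpperSet (tailIndices m n : Set (Fin m)) := by
  intro i j hij hi
  rw [mem_coe, mem_tailIndices] at hi ⊢
  exact hi.trans (Nat.add_le_add_right hij 1)

lemma card_compl_tailIndices_le : #(tailIndices m n)ᶜ ≤ n - 1 := by
  have hmaps : ∀ j ∈ (tailIndices m n)ᶜ, (j : ℕ) ∈ range (n - 1) := fun j hj => by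
    rw [mem_compl, mem_tailIndices] at hj
    exact mem_range.2 (by omega)
  simpa using card_le_card_of_injOn _ hmaps Fin.val_injective.injOn

lemma card_tailIndices_le : #(tailIndices m n) ≤ m - (n - 1) := by
  have hmaps : ∀ j ∈ tailIndices m n, (j : ℕ) ∈ Ico (n - 1) m := fun j hj => by
    rw [mem_tailIndices] at hj
    exact mem_Ico.2 (by omega)
  simpa using card_le_card_of_injOn _ hmaps Fin.val_injective.injOn

lemma lpnorm_top_indicator_tailIndices (hσ0 : 0 ≤ σ) (hσ : Antitone σ) {k : Fin m}
    (hk : (k : ℕ) + 1 = n) :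
    lpnorm ∞ ((tailIndices m n : Set (Fin m)).indicator σ) = σ k := by
  have hkT : k ∈ tailIndices m n := mem_tailIndices.2 hk.ge
  apply le_antisymm
  · rw [lpnorm, if_pos rfl]
    refine Real.iSup_le (fun j => ?_) (hσ0 k)
    rw [abs_of_nonneg (Set.indicator_nonneg (fun i _ => hσ0 i) j)]
    refine Set.indicator_apply_le' (fun hj => hσ ?_) fun _ => hσ0 k
    have := mem_tailIndices.1 (mem_coe.1 hj)
    exact Fin.le_def.2 (by omega)
  · simpa [hkT, abs_of_nonneg (hσ0 k)] using
      abs_le_lpnorm top_ne_zero ((tailIndices m n : Set (Fin m)).indicator σ) k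

lemma lpnorm_indicator_tailIndices_of_ne_top (hr0 : r ≠ 0) (hr : r ≠ ∞) (hσ0 : 0 ≤ σ) :
    lpnorm r ((tailIndices m n : Set (Fin m)).indicator σ) =
      (∑ j : Fin m, if n ≤ (j : ℕ) + 1 then σ j ^ r.toReal else 0) ^ r.toReal⁻¹ := by
  have hr_ne : r.toReal ≠ 0 := (ENNReal.toReal_pos hr0 hr).ne'
  rw [← Real.rpow_rpow_inv lpnorm_nonneg hr_ne, lpnorm_indicator_rpow_toReal hr0 hr, tailIndices,
    sum_filter]
  simp only [abs_of_nonneg (hσ0 _)]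

lemma gelfandFin_le_lpnorm_tail [HolderTriple r p q] (hq : q ≠ 0) :
    gelfandFin p q σ n ≤ lpnorm r ((tailIndices m n : Set (Fin m)).indicator σ) := by
  refine gelfandFin_le
    ((finrank_quotient_ker_funLeft_le (tailIndices m n)ᶜ).trans card_compl_tailIndices_le)
    lpnorm_nonneg fun x hx => ?_
  have hmul : σ * x = (tailIndices m n : Set (Fin m)).indicator σ * x := by
    ext j
    by_cases hj : j ∈ tailIndices m n
    · simp [hj]
    · have hxj : x j = 0 := congrFun (LinearMap.mem_ker.1 hx) ⟨j, mem_compl.2 hj⟩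
      simp [hxj]
  rw [hmul]
  exact lpnorm_mul_le hq _ _

lemma lpnorm_tail_le_gelfandFin [HolderTriple r p q] (hq : q ≠ 0) (hσ0 : 0 ≤ σ)
    (hσ : Antitone σ) :
    lpnorm r ((tailIndices m n : Set (Fin m)).indicator σ) ≤ gelfandFin p q σ n := by
  have hp : p ≠ 0 := right_ne_zero_of_holderTriple r p hq
  rcases lpnorm_nonneg.eq_or_lt with hzero | hpos
  · exact hzero.ge.trans gelfandFin_nonneg
  refine le_gelfandFin hp hq fun E hE => ?_
  have hdim := E.finrank_quotient_add_finrank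
  rw [Module.finrank_fin_fun] at hdim
  exact exists_lpnorm_indicator_mul_le hq hσ0 hσ isUpperSet_tailIndices hpos
    (card_tailIndices_le.trans (by omega))

theorem gelfandFin_eq_lpnorm_tail [HolderTriple r p q] (hq : q ≠ 0) (hσ0 : 0 ≤ σ)
    (hσ : Antitone σ) :
    gelfandFin p q σ n = lpnorm r ((tailIndices m n : Set (Fin m)).indicator σ) :=
  (gelfandFin_le_lpnorm_tail hq).antisymm (lpnorm_tail_le_gelfandFin hq hσ0 hσ)

end Gelfand

/-- For `0 < q ≤ p ≤ ∞` and non-increasing `σ₁ ≥ … ≥ σ_m ≥ 0`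
(0-indexed: `σ ⟨j-1⟩` is the paper's `σ_j`), for every `1 ≤ n ≤ m`:
`c_n(D_σ : ℓ_p^m → ℓ_q^m) = (∑_{j=n}^m σ_j^r)^{1/r}` with `1/r = 1/q - 1/p` if `q < p`,
and `c_n(D_σ : ℓ_p^m → ℓ_q^m) = σ_n` if `q = p`. -/
theorem statement17 (p q : ℝ≥0∞) (hq0 : 0 < q) (hqp : q ≤ p) (m : ℕ)
    (σ : Fin m → ℝ) (hσ0 : ∀ j, 0 ≤ σ j) (hmono : ∀ i j : Fin m, i ≤ j → σ j ≤ σ i)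
    (n : ℕ) (hn1 : 1 ≤ n) (hnm : n ≤ m) :
    gelfandFin p q σ n =
      if q = p then σ ⟨n - 1, by omega⟩
      else (∑ j : Fin m,
          if n ≤ (j : ℕ) + 1 then σ j ^ (1 / q.toReal - 1 / p.toReal)⁻¹ else 0) ^
        (1 / q.toReal - 1 / p.toReal) := by
  split_ifs with hpq
  · subst hpq
    rw [gelfandFin_eq_lpnorm_tail (r := ∞) hq0.ne' hσ0 hmono]
    exact lpnorm_top_indicator_tailIndices hσ0 hmono (Nat.sub_add_cancel hn1)
  · have := holderTriple_inv_sub_inv hqp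
    set r := (q⁻¹ - p⁻¹)⁻¹
    have hr : r ≠ ∞ := by
      simpa [r, tsub_eq_zero_iff_le] using hqp.lt_of_ne hpq
    have hexp : 1 / q.toReal - 1 / p.toReal = r.toReal⁻¹ := by
      rw [one_div, one_div, sub_eq_iff_eq_add, inv_toReal_add_inv_toReal hq0.ne']
    rw [hexp, inv_inv, gelfandFin_eq_lpnorm_tail (r := r) hq0.ne' hσ0 hmono]
    exact lpnorm_indicator_tailIndices_of_ne_top
      (left_ne_zero_of_holderTriple r p hq0.ne') hr hσ0
end
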